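/- Let k ∈ (0,1) be real and let α₁, α₂ ∈ ℂ with |α₁| < 1 and |α₂| < 1. Suppose that α₁α₂ = −k/(1 + √(1 − k²)) and that −α₁(1−|α₂|²)/(1−conj(α₂)²k) − α₂(1−|α₁|²)/(1−conj(α₁)²k) + k(conj(α₁)+conj(α₂))·((1−|α₁|²)/(1−conj(α₁)²k))·((1−|α₂|²)/(1−conj(α₂)²k)) = 0. Then α₂ = −α₁ and α₁² = k/(1 + √(1 − k²)); that is, α₁ = ±√(k/(1+√(1−k²))) and α₂ = ∓√(k/(1+√(1−k²))). -/

import Mathlib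

/-!
The coefficient `p₁` is the odd part of `B` on the spectrum `{0, ±√k}` of a matrix with `T³ = kT`.
With `s = α₁ + α₂` and `p = α₁α₂`, clearing denominators turns `p₁ = 0` into
`s̄ (k + p) = s (1 + p̄ k)`. Put `c = k / (1 + √(1 - k²))`, so that `0 < c < 1`,
`k (1 + c²) = 2c` and `p = -c`; then `k - c = c (1 - ck)` with `1 - ck ≠ 0`, and the relation
becomes `s = c s̄`. Taking norms forces `s = 0`, whence `α₂ = -α₁` and `α₁² = -p = c`.
-/

/-- The denominators in `p₁` do not vanish, since `k|z|² < 1`. -/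
lemma one_sub_conj_sq_mul_ne_zero {k : ℝ} (hk0 : 0 < k) (hk1 : k < 1) {z : ℂ} (hz : ‖z‖ < 1) :
    1 - (starRingEnd ℂ) z ^ 2 * (k : ℂ) ≠ 0 := by
  intro h
  have h2 : ‖(starRingEnd ℂ) z ^ 2 * (k : ℂ)‖ = 1 := by
    rw [← sub_eq_zero.mp h, norm_one]
  rw [norm_mul, norm_pow, RCLike.norm_conj, Complex.norm_real, Real.norm_of_nonneg hk0.le] at h2
  nlinarith [norm_nonneg z, pow_le_one₀ (norm_nonneg z) hz.le (n := 2)]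

/-- For `k ∈ (0,1)` and `|α₁|, |α₂| < 1`: if `α₁α₂ = −k/(1+√(1−k²))` and the coefficient `p₁`
of the polynomial representation of the associated degree-2 Blaschke product vanishes, then
`α₂ = −α₁` and `α₁² = k/(1+√(1−k²))`. -/
theorem extremal_zeros_determined
    (k : ℝ) (hk0 : 0 < k) (hk1 : k < 1)
    (α₁ α₂ : ℂ) (h₁ : ‖α₁‖ < 1) (h₂ : ‖α₂‖ < 1)
    (hp0 : α₁ * α₂ = -((k / (1 + Real.sqrt (1 - k ^ 2)) : ℝ) : ℂ))
    (hp1 : -α₁ * ((1 - (‖α₂‖ : ℂ) ^ 2) / (1 - (starRingEnd ℂ) α₂ ^ 2 * (k : ℂ)))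
        - α₂ * ((1 - (‖α₁‖ : ℂ) ^ 2) / (1 - (starRingEnd ℂ) α₁ ^ 2 * (k : ℂ)))
        + (k : ℂ) * ((starRingEnd ℂ) α₁ + (starRingEnd ℂ) α₂) *
            ((1 - (‖α₁‖ : ℂ) ^ 2) / (1 - (starRingEnd ℂ) α₁ ^ 2 * (k : ℂ))) *
            ((1 - (‖α₂‖ : ℂ) ^ 2) / (1 - (starRingEnd ℂ) α₂ ^ 2 * (k : ℂ))) = 0) :
    α₂ = -α₁ ∧ α₁ ^ 2 = ((k / (1 + Real.sqrt (1 - k ^ 2)) : ℝ) : ℂ) := by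
  obtain ⟨c, hc⟩ : ∃ c : ℝ, c = k / (1 + Real.sqrt (1 - k ^ 2)) := ⟨_, rfl⟩
  rw [← hc] at hp0 ⊢
  have hr0 : 0 ≤ Real.sqrt (1 - k ^ 2) := Real.sqrt_nonneg _
  have hr2 : Real.sqrt (1 - k ^ 2) ^ 2 = 1 - k ^ 2 := Real.sq_sqrt (by nlinarith)
  have hc0 : 0 < c := by rw [hc]; positivity
  have hc1 : c < 1 := by
    rw [hc, div_lt_one (by positivity)]; linarith
  have hkc : k * (1 + c ^ 2) = 2 * c := by
    have hne : 1 + Real.sqrt (1 - k ^ 2) ≠ 0 := by positivity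
    rw [hc]
    field_simp
    linear_combination hr2
  have hck : (1 - (c : ℂ) * k) ≠ 0 := by
    have : 1 - c * k ≠ 0 := by nlinarith
    exact_mod_cast this
  have hkcC : (k : ℂ) * (1 + (c : ℂ) ^ 2) = 2 * c := by exact_mod_cast hkc
  have hp0' : (starRingEnd ℂ) α₁ * (starRingEnd ℂ) α₂ = -(c : ℂ) := by
    rw [← map_mul, hp0, map_neg, Complex.conj_ofReal]
  have hd₁ := one_sub_conj_sq_mul_ne_zero hk0 hk1 h₁
  have hd₂ := one_sub_conj_sq_mul_ne_zero hk0 hk1 h₂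
  rw [← Complex.mul_conj', ← Complex.mul_conj'] at hp1
  have hs : α₁ + α₂ = c * (starRingEnd ℂ) (α₁ + α₂) := by
    rw [map_add]
    generalize (starRingEnd ℂ) α₁ = β₁ at *
    generalize (starRingEnd ℂ) α₂ = β₂ at *
    have key : (β₁ + β₂) * (k + α₁ * α₂) - (α₁ + α₂) * (1 + β₁ * β₂ * k) = 0 := by
      obtain ⟨D₁, hD₁⟩ : ∃ D, D = 1 - β₁ ^ 2 * (k : ℂ) := ⟨_, rfl⟩
      obtain ⟨D₂, hD₂⟩ : ∃ D, D = 1 - β₂ ^ 2 * (k : ℂ) := ⟨_, rfl⟩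
      rw [← hD₁, ← hD₂] at hp1
      rw [← hD₁] at hd₁
      rw [← hD₂] at hd₂
      field_simp at hp1
      rw [hD₁, hD₂] at hp1
      linear_combination hp1
    rw [hp0, hp0'] at key
    apply mul_left_cancel₀ hck
    linear_combination -key + (β₁ + β₂) * hkcC
  have hs0 : α₁ + α₂ = 0 := by
    have hn := congrArg norm hs
    rw [norm_mul, RCLike.norm_conj, Complex.norm_real, Real.norm_of_nonneg hc0.le] at hn
    apply norm_eq_zero.mp
    nlinarith [norm_nonneg (α₁ + α₂)]
  have hb : α₂ = -α₁ := by linear_combination hs0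
  refine ⟨hb, ?_⟩
  rw [hb] at hp0
  linear_combination -hp0
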